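/- Let (G, G⁺, Δ) be an LCM-Garside structure. Then the support of an element of G is well defined: (i) if a positive element a ∈ G⁺ is written in two ways a = x₁⋯x_r = y₁⋯y_s as products of atoms, then the closure of {x₁,…,x_r} equals the closure of {y₁,…,y_s}; (ii) for x ∈ G with reduced left-fraction decomposition x = a⁻¹b, the closure of the union of the set of atoms appearing in an atom factorization of a with the set of atoms appearing in an atom factorization of b does not depend on the chosen factorizations. -/

import Mathlib

open scoped Pointwise Classical

/-- A Garside structure on a group `G`: a submonoid `pos` of positive elements with
trivial units, prefix and suffix lattice operations, and a Garside element `delta`. -/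
structure GarsideStructure (G : Type*) [Group G] where
  /-- the submonoid of positive elements -/
  pos : Submonoid G
  /-- the Garside element Δ -/
  delta : G
  /-- meet for the prefix order -/
  meet : G → G → G
  /-- join for the prefix order -/
  join : G → G → G
  /-- meet for the suffix order -/
  rmeet : G → G → G
  /-- join for the suffix order -/
  rjoin : G → G → G
  units_triv : ∀ a : G, a ∈ pos → a⁻¹ ∈ pos → a = 1
  meet_le_left : ∀ a b : G, (meet a b)⁻¹ * a ∈ pos
  meet_le_right : ∀ a b : G, (meet a b)⁻¹ * b ∈ pos
  le_meet : ∀ a b c : G, c⁻¹ * a ∈ pos → c⁻¹ * b ∈ pos → c⁻¹ * meet a b ∈ pos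
  le_join_left : ∀ a b : G, a⁻¹ * join a b ∈ pos
  le_join_right : ∀ a b : G, b⁻¹ * join a b ∈ pos
  join_le : ∀ a b c : G, a⁻¹ * c ∈ pos → b⁻¹ * c ∈ pos → (join a b)⁻¹ * c ∈ pos
  rmeet_le_left : ∀ a b : G, a * (rmeet a b)⁻¹ ∈ pos
  rmeet_le_right : ∀ a b : G, b * (rmeet a b)⁻¹ ∈ pos
  le_rmeet : ∀ a b c : G, a * c⁻¹ ∈ pos → b * c⁻¹ ∈ pos → rmeet a b * c⁻¹ ∈ pos
  rjoin_le_left : ∀ a b : G, rjoin a b * a⁻¹ ∈ pos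
  rjoin_le_right : ∀ a b : G, rjoin a b * b⁻¹ ∈ pos
  rjoin_le : ∀ a b c : G, c * a⁻¹ ∈ pos → c * b⁻¹ ∈ pos → c * (rjoin a b)⁻¹ ∈ pos
  delta_pos : delta ∈ pos
  /-- Δ is balanced: its positive prefixes coincide with its positive suffixes -/
  delta_balanced : ∀ s : G, s ∈ pos → (s⁻¹ * delta ∈ pos ↔ delta * s⁻¹ ∈ pos)
  /-- the set of simple elements (divisors of Δ) is finite -/
  divDelta_finite : {s : G | s ∈ pos ∧ s⁻¹ * delta ∈ pos}.Finite
  /-- the simple elements generate `G` -/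
  divDelta_generates : Subgroup.closure {s : G | s ∈ pos ∧ s⁻¹ * delta ∈ pos} = ⊤
  /-- the atoms generate the positive monoid -/
  atoms_generate :
    Submonoid.closure {a : G | a ∈ pos ∧ a ≠ 1 ∧
      ∀ b ∈ pos, b⁻¹ * a ∈ pos → b = 1 ∨ b = a} = pos
  /-- every atom divides Δ -/
  atoms_divide_delta : ∀ a : G, a ∈ pos → a ≠ 1 →
    (∀ b ∈ pos, b⁻¹ * a ∈ pos → b = 1 ∨ b = a) → a⁻¹ * delta ∈ pos
  /-- every element is bounded below and above by powers of Δ -/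
  delta_bounds : ∀ x : G, ∃ p q : ℤ, p ≤ q ∧ (delta ^ p)⁻¹ * x ∈ pos ∧ x⁻¹ * delta ^ q ∈ pos
  /-- conjugation by Δ maps the positive monoid bijectively onto itself -/
  conj_delta : ∀ a : G, a ∈ pos ↔ delta * a * delta⁻¹ ∈ pos
  /-- some positive power of Δ is central -/
  central_power : ∃ n : ℕ, 0 < n ∧ delta ^ n ∈ Subgroup.center G
  /-- no infinite strictly decreasing (for the prefix order) sequence of positive elements -/
  no_infinite_descent : ¬ ∃ f : ℕ → G, (∀ n, f n ∈ pos) ∧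
    ∀ n, (f (n + 1))⁻¹ * f n ∈ pos ∧ f (n + 1) ≠ f n

namespace GarsideStructure

variable {G : Type*} [Group G] (S : GarsideStructure G)

/-- the prefix order: `a ≼ b` iff `a⁻¹ * b` is positive -/
def le (a b : G) : Prop := a⁻¹ * b ∈ S.pos

/-- the set of positive prefixes of an element -/
def Div (d : G) : Set G := {s : G | s ∈ S.pos ∧ S.le s d}

/-- atoms: nontrivial positive elements with no nontrivial proper positive prefix -/
def IsAtomic (a : G) : Prop :=
  a ∈ S.pos ∧ a ≠ 1 ∧ ∀ b ∈ S.pos, S.le b a → b = 1 ∨ b = a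

/-- the set of atoms -/
def atoms : Set G := {a : G | S.IsAtomic a}

/-- the left denominator of `x`: `D_L x = (1 ∧ x)⁻¹` -/
def DL (x : G) : G := (S.meet 1 x)⁻¹

/-- the left numerator of `x`: `N_L x = D_L x * x` -/
def NL (x : G) : G := S.DL x * x

/-- the (left) swap `φ(x) = N_L x * (D_L x)⁻¹ = D_L x * x * (D_L x)⁻¹` -/
def swap (x : G) : G := S.DL x * x * (S.DL x)⁻¹

/-- an element is recurrent if it is fixed by some positive iterate of the swap map -/
def Recurrent (x : G) : Prop := ∃ m : ℕ, 0 < m ∧ S.swap^[m] x = x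

/-- the set `R(x)` of recurrent conjugates of `x` -/
def Rset (x : G) : Set G := {y : G | IsConj x y ∧ S.Recurrent y}

/-- the set `C⁺(x)` of positive conjugates of `x` -/
def Cpos (x : G) : Set G := {y : G | IsConj x y ∧ y ∈ S.pos}

/-- the set `C⁻(x)` of negative conjugates of `x` -/
def Cneg (x : G) : Set G := {y : G | IsConj x y ∧ y⁻¹ ∈ S.pos}

/-- the transport of `u` at `y`: with `y = a⁻¹ b` reduced, `u^{(1)} = (a u) ∧ (b u)` -/
def transport (y u : G) : G := S.meet (S.DL y * u) (S.NL y * u)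

/-- `Δ_X`: the least upper bound for the prefix order of a set `X` (`1` if there is none) -/
noncomputable def deltaOf (X : Set G) : G :=
  if h : ∃ d : G, (∀ x ∈ X, S.le x d) ∧ ∀ c : G, (∀ x ∈ X, S.le x c) → S.le d c
  then h.choose else 1

/-- the closure `X̄ = Div(Δ_X) ∩ 𝒜` of a set of atoms -/
noncomputable def closureOf (X : Set G) : Set G := S.Div (S.deltaOf X) ∩ S.atoms

/-- the subgroup `G_X` generated by the closure of `X` -/
noncomputable def GX (X : Set G) : Subgroup G := Subgroup.closure (S.closureOf X)

/-- the support of an element: the closure of the set of atoms appearing in atom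
factorizations of its left denominator and left numerator -/
noncomputable def supp (x : G) : Set G :=
  if h : ∃ p : List G × List G,
      (∀ a ∈ p.1, a ∈ S.atoms) ∧ (∀ a ∈ p.2, a ∈ S.atoms) ∧
      p.1.prod = S.DL x ∧ p.2.prod = S.NL x
  then S.closureOf ({a : G | a ∈ h.choose.1} ∪ {a : G | a ∈ h.choose.2})
  else ∅

/-- an LCM-Garside structure -/
structure IsLCM : Prop where
  delta_eq : S.delta = S.deltaOf S.atoms
  balanced : ∀ X ⊆ S.atoms, ∀ s ∈ S.pos,
    (S.le s (S.deltaOf X) ↔ S.deltaOf X * s⁻¹ ∈ S.pos)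
  div_eq : ∀ X ⊆ S.atoms,
    S.Div (S.deltaOf X) = S.Div S.delta ∩ {g : G | g ∈ S.GX X ∧ g ∈ S.pos}
  factor_closed : ∀ X ⊆ S.atoms, ∀ g : G, g ∈ S.GX X → g ∈ S.pos →
    ∀ a b : G, a ∈ S.pos → b ∈ S.pos → g = a * b → a ∈ S.GX X ∧ b ∈ S.GX X
  lattice_closed : ∀ X ⊆ S.atoms, ∀ a b : G, a ∈ S.GX X → b ∈ S.GX X →
    S.meet a b ∈ S.GX X ∧ S.join a b ∈ S.GX X
  fraction_closed : ∀ X ⊆ S.atoms, ∀ g : G, g ∈ S.GX X →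
    S.DL g ∈ S.GX X ∧ S.NL g ∈ S.GX X

/-- a standard parabolic subgroup: the subgroup generated by a saturated set of atoms -/
noncomputable def IsStandardParabolic (H : Subgroup G) : Prop :=
  ∃ X : Set G, X ⊆ S.atoms ∧ S.closureOf X = X ∧ H = S.GX X

/-- a parabolic subgroup: a conjugate of a standard parabolic subgroup -/
noncomputable def IsParabolic (H : Subgroup G) : Prop :=
  ∃ (P : Subgroup G) (c : G), S.IsStandardParabolic P ∧
    H = Subgroup.map (MulAut.conj c).toMonoidHom P

/-- the structure is support-preserving if conjugations between positive elements
conjugate the corresponding parabolic subgroups of the supports -/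
noncomputable def SupportPreserving : Prop :=
  ∀ y ∈ S.pos, ∀ z ∈ S.pos, ∀ α : G, α⁻¹ * y * α = z →
    Subgroup.map (MulAut.conj α⁻¹).toMonoidHom (S.GX (S.supp y)) = S.GX (S.supp z)

/-- `P` is the parabolic closure of `x` -/
noncomputable def IsParabolicClosure (x : G) (P : Subgroup G) : Prop :=
  S.IsParabolic P ∧ x ∈ P ∧ ∀ H : Subgroup G, S.IsParabolic H → x ∈ H → P ≤ H

end GarsideStructure

/-!
For a set `X` of atoms, an atom lies in the closure of `X` exactly when it lies in `G_X`, because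
the simple elements of `G_X⁺` are the divisors of `Δ_X`. As `G_X⁺` is moreover closed under
factors, a product of atoms lies in `G_X` exactly when all of its atoms lie in the closure of `X`.
So which closures contain the atoms of a factorization can be read off from the product alone, and
among those closures the smallest one is the closure of the atoms themselves.
-/

namespace GarsideStructure

variable {G : Type*} [Group G] (S : GarsideStructure G)

/-- The prefix order `≼` as a join-semilattice, giving access to the order-theoretic library. It is
not an instance, since it depends on `S` and not only on the group. -/
abbrev prefixOrder : SemilatticeSup G where
  le := S.le
  le_refl a := by simp [le]
  le_trans a b c hab hbc := by
    simpa only [le, mul_assoc, mul_inv_cancel_left] using S.pos.mul_mem hab hbc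
  le_antisymm a b hab hba :=
    inv_mul_eq_one.mp (S.units_triv _ hab (by simpa only [le, mul_inv_rev, inv_inv] using hba))
  sup := S.join
  le_sup_left := S.le_join_left
  le_sup_right := S.le_join_right
  sup_le := S.join_le

theorem exists_lub {X : Set G} (hX : X.Finite) (hne : X.Nonempty) :
    ∃ d : G, (∀ x ∈ X, S.le x d) ∧ ∀ c : G, (∀ x ∈ X, S.le x c) → S.le d c := by
  let := S.prefixOrder
  obtain ⟨s, rfl⟩ := hX.exists_finset_coe
  have hlub := s.isLUB_sup' (Finset.coe_nonempty.mp hne)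
  exact ⟨_, fun _ hx => hlub.1 hx, fun _ hc => hlub.2 hc⟩

variable {S} {X Y : Set G}

theorem le_trans {a b c : G} (hab : S.le a b) (hbc : S.le b c) : S.le a c :=
  S.prefixOrder.le_trans a b c hab hbc

theorem one_le_iff {a : G} : S.le 1 a ↔ a ∈ S.pos := by
  rw [le, inv_one, one_mul]

theorem atoms_subset_pos : S.atoms ⊆ S.pos :=
  fun _ ha => ha.1

theorem atoms_subset_Div_delta : S.atoms ⊆ S.Div S.delta :=
  fun a ha => ⟨ha.1, S.atoms_divide_delta a ha.1 ha.2.1 ha.2.2⟩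

theorem atoms_finite : S.atoms.Finite :=
  S.divDelta_finite.subset atoms_subset_Div_delta

theorem le_deltaOf (hX : X.Finite) {x : G} (hx : x ∈ X) : S.le x (S.deltaOf X) := by
  have hlub := S.exists_lub hX ⟨x, hx⟩
  rw [deltaOf, dif_pos hlub]
  exact hlub.choose_spec.1 x hx

-- If `X` has no join, `deltaOf X` is the junk value `1`, and `1 ≼ c` says that `c` is positive.
theorem deltaOf_le {c : G} (hc : c ∈ S.pos) (h : ∀ x ∈ X, S.le x c) : S.le (S.deltaOf X) c := by
  rw [deltaOf]
  split_ifs with hlub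
  · exact hlub.choose_spec.2 c h
  · exact one_le_iff.mpr hc

theorem deltaOf_mem_pos (hX : X.Finite) (hpos : X ⊆ S.pos) : S.deltaOf X ∈ S.pos := by
  rcases X.eq_empty_or_nonempty with rfl | ⟨x, hx⟩
  · rw [deltaOf]
    split_ifs with hlub
    · -- A least element `d` of `G` is positive, since `d ≼ d * d`.
      simpa only [le, inv_mul_cancel_left] using
        hlub.choose_spec.2 (hlub.choose * hlub.choose) (by simp)
    · exact S.pos.one_mem
  · exact one_le_iff.mp (le_trans (one_le_iff.mpr (hpos hx)) (le_deltaOf hX hx))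

theorem subset_closureOf (hX : X ⊆ S.atoms) : X ⊆ S.closureOf X :=
  fun _ hx => ⟨⟨(hX hx).1, le_deltaOf (atoms_finite.subset hX) hx⟩, hX hx⟩

theorem closureOf_subset_closureOf (hX : X ⊆ S.atoms) (hYX : Y ⊆ S.closureOf X) :
    S.closureOf Y ⊆ S.closureOf X := by
  have hle : S.le (S.deltaOf Y) (S.deltaOf X) :=
    deltaOf_le (deltaOf_mem_pos (atoms_finite.subset hX) (hX.trans atoms_subset_pos))
      fun y hy => (hYX hy).1.2
  rintro a ⟨⟨hpos, ha⟩, hatom⟩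
  exact ⟨⟨hpos, le_trans ha hle⟩, hatom⟩

theorem closureOf_eq_closureOf (hX : X ⊆ S.atoms) (hY : Y ⊆ S.atoms)
    (h : ∀ Z ⊆ S.atoms, X ⊆ S.closureOf Z ↔ Y ⊆ S.closureOf Z) :
    S.closureOf X = S.closureOf Y :=
  (closureOf_subset_closureOf hY ((h Y hY).mpr (subset_closureOf hY))).antisymm
    (closureOf_subset_closureOf hX ((h X hX).mp (subset_closureOf hX)))

namespace IsLCM

theorem atom_mem_GX_iff (hS : S.IsLCM) (hX : X ⊆ S.atoms) {a : G} (ha : a ∈ S.atoms) :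
    a ∈ S.GX X ↔ a ∈ S.closureOf X := by
  refine ⟨fun haX => ⟨?_, ha⟩, fun haX => Subgroup.subset_closure haX⟩
  rw [hS.div_eq X hX]
  exact ⟨atoms_subset_Div_delta ha, haX, ha.1⟩

theorem mul_mem_GX_iff (hS : S.IsLCM) (hX : X ⊆ S.atoms) {a b : G} (ha : a ∈ S.pos)
    (hb : b ∈ S.pos) : a * b ∈ S.GX X ↔ a ∈ S.GX X ∧ b ∈ S.GX X :=
  ⟨fun hab => hS.factor_closed X hX (a * b) hab (S.pos.mul_mem ha hb) a b ha hb rfl,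
    fun h => (S.GX X).mul_mem h.1 h.2⟩

theorem list_prod_mem_GX_iff (hS : S.IsLCM) (hX : X ⊆ S.atoms) {l : List G}
    (hl : ∀ b ∈ l, b ∈ S.atoms) : l.prod ∈ S.GX X ↔ {b | b ∈ l} ⊆ S.closureOf X := by
  induction l with
  | nil => simp
  | cons a t ih =>
    obtain ⟨ha, ht⟩ := List.forall_mem_cons.mp hl
    have ht_pos : t.prod ∈ S.pos := list_prod_mem fun b hb => atoms_subset_pos (ht b hb)
    rw [List.prod_cons, hS.mul_mem_GX_iff hX ha.1 ht_pos, hS.atom_mem_GX_iff hX ha, ih ht]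
    exact List.forall_mem_cons.symm

end IsLCM

end GarsideStructure

/-- in an LCM-Garside structure the support is well defined:
(i) the closure of the set of atoms in an atom factorization of a positive element does
not depend on the factorization; (ii) for an arbitrary element with reduced left-fraction
decomposition `x = a⁻¹b` the closure of the union of the atoms appearing in atom
factorizations of `a` and `b` does not depend on the chosen factorizations. -/
theorem garside_support_well_defined {G : Type*} [Group G]
    (S : GarsideStructure G) (hS : S.IsLCM) :
    (∀ a ∈ S.pos, ∀ l₁ l₂ : List G,
      (∀ b ∈ l₁, b ∈ S.atoms) → (∀ b ∈ l₂, b ∈ S.atoms) →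
      l₁.prod = a → l₂.prod = a →
      S.closureOf {b : G | b ∈ l₁} = S.closureOf {b : G | b ∈ l₂}) ∧
    (∀ x : G, ∀ l₁ l₂ l₃ l₄ : List G,
      (∀ b ∈ l₁, b ∈ S.atoms) → (∀ b ∈ l₂, b ∈ S.atoms) →
      (∀ b ∈ l₃, b ∈ S.atoms) → (∀ b ∈ l₄, b ∈ S.atoms) →
      l₁.prod = S.DL x → l₂.prod = S.NL x → l₃.prod = S.DL x → l₄.prod = S.NL x →
      S.closureOf ({b : G | b ∈ l₁} ∪ {b : G | b ∈ l₂}) =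
        S.closureOf ({b : G | b ∈ l₃} ∪ {b : G | b ∈ l₄})) := by
  refine ⟨fun a _ l₁ l₂ h₁ h₂ e₁ e₂ => ?_, fun x l₁ l₂ l₃ l₄ h₁ h₂ h₃ h₄ e₁ e₂ e₃ e₄ => ?_⟩
  · refine GarsideStructure.closureOf_eq_closureOf h₁ h₂ fun Z hZ => ?_
    rw [← hS.list_prod_mem_GX_iff hZ h₁, ← hS.list_prod_mem_GX_iff hZ h₂, e₁, e₂]
  · refine GarsideStructure.closureOf_eq_closureOf (Set.union_subset h₁ h₂)
      (Set.union_subset h₃ h₄) fun Z hZ => ?_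
    rw [Set.union_subset_iff, Set.union_subset_iff,
      ← hS.list_prod_mem_GX_iff hZ h₁, ← hS.list_prod_mem_GX_iff hZ h₂,
      ← hS.list_prod_mem_GX_iff hZ h₃, ← hS.list_prod_mem_GX_iff hZ h₄, e₁, e₂, e₃, e₄]
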